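/- Let K be a field of characteristic not 2 and not 3. Let P be a multilinear polynomial of degree 4 in one formal bilinear operation such that, in every alternative dialgebra over K, P vanishes identically when the formal operation is interpreted as the dicommutator ⟨a,b⟩ = a ⊣ b − b ⊢ a. Then P vanishes identically in every Malcev dialgebra over K; that is, P is a consequence of right anticommutativity and the di-Malcev identity. -/

import Mathlib

/-- Formal monomials of a single binary operation in variables `x_0, …, x_{n-1}`:
binary trees whose leaves are labelled by variables. -/
inductive BTree (n : ℕ) : Type
  | leaf : Fin n → BTree n
  | node : BTree n → BTree n → BTree n

namespace BTree

/-- Evaluate a monomial in an algebra with binary operation `m`,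
assigning the value `x i` to the variable `i`. -/
def eval {n : ℕ} {V : Type} (m : V → V → V) (x : Fin n → V) : BTree n → V
  | leaf i => x i
  | node s t => m (eval m x s) (eval m x t)

/-- The multiset of variables occurring in a monomial. -/
def vars {n : ℕ} : BTree n → Multiset (Fin n)
  | leaf i => {i}
  | node s t => vars s + vars t

/-- A monomial of degree `n` is multilinear if each of the `n` variables
occurs in it exactly once. -/
def Multilinear {n : ℕ} (t : BTree n) : Prop :=
  vars t = (Finset.univ : Finset (Fin n)).val

end BTree

/-!
Modulo the Malcev identities and up to a factor `3`, every multilinear monomial of degree `4` with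
leftmost variable `a` reduces to left-normed words `((ab)c)d` and to terms `J(a, b, c)d` and
`aJ(b, c, d)` containing a Jacobian. In an alternative algebra the Jacobian of the commutator is
`6` times the associator. Hence the words are detected by commutators of quaternions, where
Jacobians vanish, and the Jacobian terms by the Cayley bimodule of the quaternions. Finally, the
split null extension of an alternative algebra by its regular bimodule is an alternative dialgebra
in which a dicommutator monomial depends on the bimodule part of its leftmost entry only, which
separates the leftmost variables. So a single alternative dialgebra of dimension `16` shows that the
normal monomials are independent, and it satisfies the Malcev identities as well.
-/

section Bilinear

variable {R A M : Type*} [CommRing R] [AddCommGroup A] [Module R A] [AddCommGroup M] [Module R M]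

/-- The right Jacobian of a bilinear product. The order of the factors matters, as the product need
not be anticommutative. -/
def jacobian (f : M →ₗ[R] M →ₗ[R] M) (a b c : M) : M := f (f a b) c - f (f a c) b - f a (f b c)

/-- The axioms of a right Malcev dialgebra with product `f`. -/
structure IsMalcevDialgebra (f : M →ₗ[R] M →ₗ[R] M) : Prop where
  right_anticomm (a b c : M) : f a (f b c) + f a (f c b) = 0
  malcev (a b c d : M) :
    f (f (f a b) c) d - f (f (f a d) b) c - f (f a (f c d)) b
      - f (f a c) (f b d) - f a (f (f b c) d) = 0

/-- The associator of a bilinear product. -/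
def assoc (μ : A →ₗ[R] A →ₗ[R] A) (a b c : A) : A := μ (μ a b) c - μ a (μ b c)

/-- The dicommutator of a left product `l` and a right product `r`, which is the commutator of the
product if `l = r`. -/
def dicommutator (l r : A →ₗ[R] A →ₗ[R] A) : A →ₗ[R] A →ₗ[R] A := l - r.flip

lemma dicommutator_apply (l r : A →ₗ[R] A →ₗ[R] A) (a b : A) :
    dicommutator l r a b = l a b - r b a := rfl

/-- Alternativity of a bilinear product. -/
structure IsAlternative (μ : A →ₗ[R] A →ₗ[R] A) : Prop where
  left_alternative (a b : A) : μ (μ a a) b = μ a (μ a b)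
  right_alternative (a b : A) : μ (μ a b) b = μ a (μ b b)

/-- The hypothesis `hJ` linearises `J(ab, b, c) = b J(a, b, c)`, one of the classical forms of the
Malcev identity. -/
theorem isMalcevDialgebra_of_anticommutative {f : M →ₗ[R] M →ₗ[R] M} (h2 : IsUnit (2 : R))
    (hf : ∀ a b, f b a = -f a b)
    (hJ : ∀ a b c d, jacobian f (f a b) c d + jacobian f (f a c) b d
      = f b (jacobian f a c d) + f c (jacobian f a b d)) :
    IsMalcevDialgebra f where
  right_anticomm a b c := by rw [← map_add, hf b c, add_neg_cancel, map_zero]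
  malcev a b c d := by
    refine h2.smul_eq_zero.mp ?_
    have h₁ := hJ a b c d
    have h₂ := hJ b c d a
    have h₃ := hJ d a c b
    simp only [jacobian, map_sub, hf a b, hf a c, hf a d, hf b c, hf b d,
      hf c d, fun x y => hf (f x y) a, fun x y => hf (f x y) b, fun x y => hf (f x y) c,
      fun x y => hf (f x y) d, hf (f a b) (f c d), hf (f a c) (f b d), hf (f a d) (f b c),
      map_neg, LinearMap.neg_apply] at h₁ h₂ h₃ ⊢
    linear_combination (norm := module) h₁ + h₂ - h₃

/-- The Kleinfeld function of a bilinear product. It is alternating in an alternative algebra,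
whence the identities of degree `4` of the commutator. -/
def kleinfeld (μ : A →ₗ[R] A →ₗ[R] A) (a b c d : A) : A :=
  assoc μ (μ a b) c d - μ b (assoc μ a c d) - μ (assoc μ b c d) a

lemma assoc_cocycle (μ : A →ₗ[R] A →ₗ[R] A) (a b c d : A) :
    assoc μ (μ a b) c d - assoc μ a (μ b c) d + assoc μ a b (μ c d)
      = μ a (assoc μ b c d) + μ (assoc μ a b c) d := by
  simp only [assoc, map_sub, LinearMap.sub_apply]
  abel

namespace IsAlternative

variable {μ : A →ₗ[R] A →ₗ[R] A} (hμ : IsAlternative μ)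
include hμ

lemma assoc_swap_left (a b c : A) : assoc μ b a c = -assoc μ a b c := by
  have h := hμ.left_alternative (a + b) c
  simp only [map_add, LinearMap.add_apply] at h
  simp only [assoc]
  linear_combination (norm := module) h - hμ.left_alternative a c - hμ.left_alternative b c

lemma assoc_swap_right (a b c : A) : assoc μ a c b = -assoc μ a b c := by
  have h := hμ.right_alternative a (b + c)
  simp only [map_add, LinearMap.add_apply] at h
  simp only [assoc]
  linear_combination (norm := module) h - hμ.right_alternative a b - hμ.right_alternative a c

lemma assoc_rotate (a b c : A) : assoc μ b c a = assoc μ a b c := by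
  rw [hμ.assoc_swap_right, hμ.assoc_swap_left, neg_neg]

lemma assoc_swap_outer (a b c : A) : assoc μ c b a = -assoc μ a b c := by
  rw [hμ.assoc_swap_left, hμ.assoc_rotate]

lemma kleinfeld_alternating_sum (a b c d : A) :
    kleinfeld μ a b c d - kleinfeld μ b c d a + kleinfeld μ c d a b
      = dicommutator μ μ a (assoc μ b c d) - dicommutator μ μ b (assoc μ c d a)
        + dicommutator μ μ c (assoc μ d a b) - dicommutator μ μ d (assoc μ a b c) := by
  have h := assoc_cocycle μ a b c d
  rw [← hμ.assoc_rotate a (μ b c) d, hμ.assoc_rotate (μ c d) a b] at h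
  simp only [kleinfeld, dicommutator_apply, hμ.assoc_rotate a c d, ← hμ.assoc_rotate b d a,
    ← hμ.assoc_rotate c a b]
  linear_combination (norm := module) h

lemma kleinfeld_rotate (a b c d : A) : kleinfeld μ b c d a = -kleinfeld μ a b c d := by
  linear_combination (norm := module)
    hμ.kleinfeld_alternating_sum b c d a + hμ.kleinfeld_alternating_sum c d a b

lemma kleinfeld_swap_right (a b c d : A) : kleinfeld μ a b d c = -kleinfeld μ a b c d := by
  simp only [kleinfeld, hμ.assoc_swap_right _ c d, map_neg, LinearMap.neg_apply]
  abel

lemma kleinfeld_swap_middle (a b c d : A) : kleinfeld μ a c b d = -kleinfeld μ a b c d := by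
  rw [hμ.kleinfeld_rotate d a c b, hμ.kleinfeld_swap_right, hμ.kleinfeld_rotate d a b c]

lemma kleinfeld_swap_left (a b c d : A) : kleinfeld μ b a c d = -kleinfeld μ a b c d := by
  rw [hμ.kleinfeld_rotate d b a c, hμ.kleinfeld_swap_middle, hμ.kleinfeld_rotate d a b c]

lemma kleinfeld_swap_outer (a b c d : A) : kleinfeld μ c b a d = -kleinfeld μ a b c d := by
  rw [hμ.kleinfeld_swap_left, hμ.kleinfeld_swap_middle, hμ.kleinfeld_swap_left, neg_neg]

lemma jacobian_commutator (a b c : A) :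
    jacobian (dicommutator μ μ) a b c = (6 : R) • assoc μ a b c := by
  have h₁ := hμ.assoc_swap_left a b c
  have h₂ := hμ.assoc_swap_right a b c
  have h₃ := hμ.assoc_rotate a b c
  have h₄ := hμ.assoc_rotate c a b
  have h₅ := hμ.assoc_swap_outer a b c
  simp only [jacobian, dicommutator_apply, assoc, map_sub, LinearMap.sub_apply] at *
  linear_combination (norm := module) h₃ - h₄ - h₁ - h₂ - h₅

lemma jacobian_commutator_add_swap (a b c d : A) :
    jacobian (dicommutator μ μ) (dicommutator μ μ a b) c d
        + jacobian (dicommutator μ μ) (dicommutator μ μ a c) b d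
      = dicommutator μ μ b (jacobian (dicommutator μ μ) a c d)
        + dicommutator μ μ c (jacobian (dicommutator μ μ) a b d) := by
  have h₁ := hμ.kleinfeld_swap_middle a b c d
  have h₂ := hμ.kleinfeld_swap_outer b a c d
  have h₃ := congrArg (dicommutator μ μ a) (hμ.assoc_swap_left b c d)
  simp only [kleinfeld] at h₁ h₂
  simp only [hμ.jacobian_commutator, dicommutator_apply, assoc, map_sub, map_neg,
    map_smul, LinearMap.sub_apply] at *
  linear_combination (norm := module) (6 : R) • (h₁ - h₂ - h₃)

theorem isMalcevDialgebra_commutator (h2 : IsUnit (2 : R)) :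
    IsMalcevDialgebra (dicommutator μ μ) :=
  isMalcevDialgebra_of_anticommutative h2
    (fun a b => by rw [dicommutator_apply, dicommutator_apply, neg_sub])
    hμ.jacobian_commutator_add_swap

end IsAlternative

end Bilinear

section SplitNull

variable {R A : Type*} [CommRing R] [AddCommGroup A] [Module R A]

/-- The axioms of an alternative dialgebra with left product `l` and right product `r`. -/
structure IsAlternativeDialgebra (l r : A →ₗ[R] A →ₗ[R] A) : Prop where
  right_bar (a b c : A) : r (l a b) c = r (r a b) c
  left_bar (a b c : A) : l a (l b c) = l a (r b c)
  left_add_right (a b c : A) : (l (l a b) c - l a (l b c)) + (r (r c b) a - r c (r b a)) = 0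
  left_sub_right (a b c : A) : (l (l a b) c - l a (l b c)) - (r (r b c) a - r b (r c a)) = 0
  inner_add_right (a b c : A) : (l (r a b) c - r a (l b c)) + (r (r a c) b - r a (r c b)) = 0

/-- The left product of the split null dialgebra `A × A` of an algebra `A`, whose second factor is
the regular bimodule. The bimodule part of `a ⊣ b` involves that of `a` only. -/
def splitNullLeft (μ : A →ₗ[R] A →ₗ[R] A) : A × A →ₗ[R] A × A →ₗ[R] A × A :=
  LinearMap.mk₂ R (fun a b => (μ a.1 b.1, μ a.2 b.1)) (by simp) (by simp) (by simp) (by simp)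

/-- The right product of the split null dialgebra `A × A`: the bimodule part of `a ⊢ b` involves
that of `b` only. -/
def splitNullRight (μ : A →ₗ[R] A →ₗ[R] A) : A × A →ₗ[R] A × A →ₗ[R] A × A :=
  LinearMap.mk₂ R (fun a b => (μ a.1 b.1, μ a.1 b.2)) (by simp) (by simp) (by simp) (by simp)

theorem IsAlternative.isAlternativeDialgebra_splitNull {μ : A →ₗ[R] A →ₗ[R] A}
    (hμ : IsAlternative μ) : IsAlternativeDialgebra (splitNullLeft μ) (splitNullRight μ) where
  right_bar _ _ _ := rfl
  left_bar _ _ _ := rfl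
  left_add_right a b c :=
    have key (u v w : A) : assoc μ u v w + assoc μ w v u = 0 := by
      rw [hμ.assoc_swap_outer u, add_neg_cancel]
    Prod.ext (key a.1 b.1 c.1) (key a.2 b.1 c.1)
  left_sub_right a b c :=
    have key (u v w : A) : assoc μ u v w - assoc μ v w u = 0 := by
      rw [hμ.assoc_rotate u, sub_self]
    Prod.ext (key a.1 b.1 c.1) (key a.2 b.1 c.1)
  inner_add_right a b c :=
    have key (u v w : A) : assoc μ u v w + assoc μ u w v = 0 := by
      rw [hμ.assoc_swap_right u v, add_neg_cancel]
    Prod.ext (key a.1 b.1 c.1) (key a.1 b.2 c.1)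

theorem isMalcevDialgebra_splitNull {μ : A →ₗ[R] A →ₗ[R] A}
    (hμ : IsMalcevDialgebra (dicommutator μ μ)) :
    IsMalcevDialgebra (dicommutator (splitNullLeft μ) (splitNullRight μ)) where
  right_anticomm a b c :=
    Prod.ext (hμ.right_anticomm a.1 b.1 c.1) (hμ.right_anticomm a.2 b.1 c.1)
  malcev a b c d :=
    Prod.ext (hμ.malcev a.1 b.1 c.1 d.1) (hμ.malcev a.2 b.1 c.1 d.1)

end SplitNull

section NullCayley

open scoped Quaternion

variable {K : Type*} [CommRing K]

/-- The degenerate Cayley–Dickson double of the quaternions, that is, their split null extension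
by the Cayley bimodule. -/
def nullCayley : ℍ[K] × ℍ[K] →ₗ[K] ℍ[K] × ℍ[K] →ₗ[K] ℍ[K] × ℍ[K] :=
  LinearMap.mk₂ K (fun a b => (a.1 * b.1, b.2 * a.1 + a.2 * star b.1))
    (fun _ _ _ => Prod.ext (by simp [add_mul]) (by simp [add_mul, mul_add, add_add_add_comm]))
    (fun _ _ _ => Prod.ext (by simp) (by simp))
    (fun _ _ _ => Prod.ext (by simp [mul_add]) (by simp [add_mul, mul_add, add_add_add_comm]))
    (fun _ _ _ => Prod.ext (by simp) (by simp))

lemma nullCayley_apply (a b : ℍ[K] × ℍ[K]) :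
    nullCayley a b = (a.1 * b.1, b.2 * a.1 + a.2 * star b.1) := rfl

theorem isAlternative_nullCayley : IsAlternative (nullCayley (K := K)) where
  left_alternative a b := by
    simp only [nullCayley_apply]
    ext <;> simp <;> ring
  right_alternative a b := by
    simp only [nullCayley_apply]
    ext <;> simp <;> ring

lemma fst_dicommutator_nullCayley (a b : ℍ[K] × ℍ[K]) :
    (dicommutator nullCayley nullCayley a b).1 = ⁅a.1, b.1⁆ := rfl

lemma dicommutator_nullCayley_inr_inl (u d : ℍ[K]) :
    dicommutator nullCayley nullCayley (0, u) (d, 0) = (0, u * (star d - d)) := by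
  simp [dicommutator_apply, nullCayley_apply, mul_sub]

lemma dicommutator_nullCayley_inl_inr (d u : ℍ[K]) :
    dicommutator nullCayley nullCayley (d, 0) (0, u) = (0, u * (d - star d)) := by
  simp [dicommutator_apply, nullCayley_apply, mul_sub]

lemma jacobian_nullCayley_inl (b c d : ℍ[K]) :
    jacobian (dicommutator nullCayley nullCayley) (b, 0) (c, 0) (d, 0) = 0 := by
  rw [isAlternative_nullCayley.jacobian_commutator]
  simp [assoc, nullCayley_apply, mul_assoc]

lemma fst_jacobian_nullCayley (a b c : ℍ[K] × ℍ[K]) :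
    (jacobian (dicommutator nullCayley nullCayley) a b c).1 = 0 := by
  rw [isAlternative_nullCayley.jacobian_commutator]
  simp [assoc, nullCayley_apply, mul_assoc]

lemma jacobian_nullCayley_inr_inl_inl (u b c : ℍ[K]) :
    jacobian (dicommutator nullCayley nullCayley) (0, u) (b, 0) (c, 0)
      = (0, (6 : K) • (u * ⁅star b, star c⁆)) := by
  rw [isAlternative_nullCayley.jacobian_commutator]
  simp [assoc, nullCayley_apply, mul_assoc, Ring.lie_def, mul_sub]

end NullCayley

section Normal

open scoped Quaternion

/-- Indices of the normal monomials of degree `4` with a prescribed leftmost variable: words, and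
two kinds of monomials containing a Jacobian. -/
abbrev NormalIndex : Type := Equiv.Perm (Fin 3) ⊕ Fin 3 ⊕ Unit

/-- The normal monomials of degree `4`, to which all monomials with leftmost entry `a` and further
entries `y` reduce modulo the Malcev identities. The indices `i + 1` and `i + 2` are cyclic. -/
def normal {R M : Type*} [CommRing R] [AddCommGroup M] [Module R M] (f : M →ₗ[R] M →ₗ[R] M)
    (a : M) (y : Fin 3 → M) : NormalIndex → M
  | .inl σ => f (f (f a (y (σ 0))) (y (σ 1))) (y (σ 2))
  | .inr (.inl i) => f (jacobian f a (y (i + 1)) (y (i + 2))) (y i)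
  | .inr (.inr _) => f a (jacobian f (y 0) (y 1) (y 2))

variable {K : Type*} [CommRing K]

lemma sum_perm_fin_three {M : Type*} [AddCommMonoid M] (g : Equiv.Perm (Fin 3) → M) :
    ∑ σ, g σ = g 1 + g (Equiv.swap 0 1) + g (Equiv.swap 0 2) + g (Equiv.swap 1 2)
      + g (finRotate 3) + g (finRotate 3)⁻¹ := by
  have h : (Finset.univ : Finset (Equiv.Perm (Fin 3))) = {1, Equiv.swap 0 1, Equiv.swap 0 2,
      Equiv.swap 1 2, finRotate 3, (finRotate 3)⁻¹} := by decide
  rw [h]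
  repeat rw [Finset.sum_insert (by decide)]
  simp only [Finset.sum_singleton, add_assoc]

/-- The quaternion unit `i`. -/
@[simps]
def quatI : ℍ[K] := ⟨0, 1, 0, 0⟩

/-- The quaternion unit `j`. -/
@[simps]
def quatJ : ℍ[K] := ⟨0, 0, 1, 0⟩

/-- The quaternion unit `k`. -/
@[simps]
def quatK : ℍ[K] := ⟨0, 0, 0, 1⟩

section Words

variable {α : Equiv.Perm (Fin 3) → K}
  (h : ∀ (a : ℍ[K]) (y : Fin 3 → ℍ[K]), ∑ σ, α σ • ⁅⁅⁅a, y (σ 0)⁆, y (σ 1)⁆, y (σ 2)⁆ = 0)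
include h

lemma sum_word_mul_left (τ : Equiv.Perm (Fin 3)) (a : ℍ[K]) (y : Fin 3 → ℍ[K]) :
    ∑ σ, α (τ * σ) • ⁅⁅⁅a, y (σ 0)⁆, y (σ 1)⁆, y (σ 2)⁆ = 0 := by
  rw [← h a (y ∘ ⇑τ⁻¹), ← Equiv.sum_comp (Equiv.mulLeft τ) fun σ => α σ • _]
  simp

lemma word_coeff_swap_zero_one (h2 : IsUnit (2 : K)) : α (Equiv.swap 0 1) = -α 1 := by
  have key : 2 ^ 3 * (α 1 + α (Equiv.swap 0 1)) = 0 := by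
    linear_combination (norm := (
        simp [sum_perm_fin_three, Equiv.swap_apply_def, Ring.lie_def]; ring))
      congrArg QuaternionAlgebra.imJ (h quatI ![quatJ, quatJ, quatK])
  exact eq_neg_of_add_eq_zero_right ((h2.pow 3).mul_right_eq_zero.mp key)

lemma word_coeff_swap_zero_two (h2 : IsUnit (2 : K)) : α (Equiv.swap 0 2) = α 1 := by
  have key : 2 ^ 3 * (α (Equiv.swap 0 2) - α 1) = 0 := by
    linear_combination (norm := (
        simp [sum_perm_fin_three, Equiv.swap_apply_def, Ring.lie_def]; ring))
      -congrArg QuaternionAlgebra.imI (h quatI ![quatJ, quatI, quatK])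
  exact sub_eq_zero.mp ((h2.pow 3).mul_right_eq_zero.mp key)

lemma word_coeff_eq_zero (h2 : IsUnit (2 : K)) : α = 0 := by
  have h01 (τ) : α (τ * Equiv.swap 0 1) = -α τ := by
    simpa using word_coeff_swap_zero_one (sum_word_mul_left h τ) h2
  have h02 (τ) : α (τ * Equiv.swap 0 2) = α τ := by
    simpa using word_coeff_swap_zero_two (sum_word_mul_left h τ) h2
  funext τ
  have h12 : α (τ * Equiv.swap 1 2) = -α τ := by
    rw [show (Equiv.swap 1 2 : Equiv.Perm (Fin 3))
      = Equiv.swap 0 2 * Equiv.swap 0 1 * Equiv.swap 0 2 by decide, ← mul_assoc, ← mul_assoc,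
      h02, h01, h02]
  have h12' : α (τ * Equiv.swap 1 2) = α τ := by
    rw [show (Equiv.swap 1 2 : Equiv.Perm (Fin 3))
      = Equiv.swap 0 1 * Equiv.swap 0 2 * Equiv.swap 0 1 by decide, ← mul_assoc, ← mul_assoc,
      h01, h02, h01, neg_neg]
  exact h2.mul_right_eq_zero.mp (by linear_combination h12 - h12')

end Words

lemma jacobian_coeff_eq_zero {β : Fin 3 → K} (h2 : IsUnit (2 : K)) (h3 : IsUnit (3 : K))
    (h : ∀ y : Fin 3 → ℍ[K],
      ∑ i, β i • (⁅star (y (i + 1)), star (y (i + 2))⁆ * (star (y i) - y i)) = 0) :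
    β = 0 := by
  have h01 : 2 ^ 2 * (β 1 - β 0) = 0 := by
    linear_combination (norm := (simp [Fin.sum_univ_three, Ring.lie_def]; ring))
      congrArg QuaternionAlgebra.imJ (h ![quatI, quatI, quatJ])
  have h12 : 2 ^ 2 * (β 2 - β 1) = 0 := by
    linear_combination (norm := (simp [Fin.sum_univ_three, Ring.lie_def]; ring))
      congrArg QuaternionAlgebra.imJ (h ![quatJ, quatI, quatI])
  have h012 : 2 ^ 2 * (β 0 + β 1 + β 2) = 0 := by
    linear_combination (norm := (simp [Fin.sum_univ_three, Ring.lie_def]; ring))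
      congrArg QuaternionAlgebra.re (h ![quatI, quatJ, quatK])
  have h1 : 2 ^ 2 * (3 * β 1) = 0 := by linear_combination h012 + h01 - h12
  rw [(h2.pow 2).mul_right_eq_zero] at h01 h12 h1
  rw [h3.mul_right_eq_zero] at h1
  rw [sub_eq_zero] at h01 h12
  funext i
  fin_cases i <;> simp [h12, ← h01, h1]

lemma sum_normal {R M : Type*} [CommRing R] [AddCommGroup M] [Module R M]
    (f : M →ₗ[R] M →ₗ[R] M) (a : M) (y : Fin 3 → M) (γ : NormalIndex → R) :
    ∑ i, γ i • normal f a y i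
      = ∑ σ, γ (.inl σ) • f (f (f a (y (σ 0))) (y (σ 1))) (y (σ 2))
        + (∑ i, γ (.inr (.inl i)) • f (jacobian f a (y (i + 1)) (y (i + 2))) (y i)
          + γ (.inr (.inr ())) • f a (jacobian f (y 0) (y 1) (y 2))) := by
  simp only [Fintype.sum_sum_type, Fintype.sum_unique, normal, PUnit.default_eq_unit]

theorem normal_coeff_eq_zero {γ : NormalIndex → K} (h2 : IsUnit (2 : K)) (h3 : IsUnit (3 : K))
    (h : ∀ a y, ∑ i, γ i • normal (dicommutator (nullCayley (K := K)) nullCayley) a y i = 0) :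
    γ = 0 := by
  have h6 : IsUnit (6 : K) := by
    rw [show (6 : K) = 2 * 3 by norm_num]
    exact h2.mul h3
  simp only [sum_normal] at h
  have hword : (fun σ => γ (.inl σ)) = 0 := by
    refine word_coeff_eq_zero (fun a y => ?_) h2
    have := congrArg Prod.fst (h (a, 0) fun i => (y i, 0))
    simpa [Prod.fst_sum, fst_dicommutator_nullCayley, fst_jacobian_nullCayley,
      Ring.lie_def (0 : ℍ[K]), Ring.lie_def _ (0 : ℍ[K])] using this
  simp only [funext_iff, Pi.zero_apply] at hword
  simp only [hword, zero_smul, Finset.sum_const_zero, zero_add] at h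
  have hjac : (fun i => γ (.inr (.inl i))) = 0 := by
    refine jacobian_coeff_eq_zero h2 h3 fun y => h6.smul_eq_zero.mp ?_
    have := congrArg Prod.snd (h (0, 1) fun i => (y i, 0))
    simpa [Prod.snd_sum, jacobian_nullCayley_inr_inl_inl, jacobian_nullCayley_inl,
      dicommutator_nullCayley_inr_inl, Finset.smul_sum, smul_comm (6 : K)] using this
  simp only [funext_iff, Pi.zero_apply] at hjac
  simp only [hjac, zero_smul, Finset.sum_const_zero, zero_add] at h
  have hlast : γ (.inr (.inr ())) = 0 := by
    have := congrArg (fun p => p.2.re) (h (quatK, 0) ![(0, 1), (quatI, 0), (quatJ, 0)])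
    simpa [jacobian_nullCayley_inr_inl_inl, dicommutator_nullCayley_inl_inr, Ring.lie_def,
      one_add_one_eq_two, (h6.mul (h2.mul h2)).mul_left_eq_zero] using this
  funext i
  rcases i with σ | i | _
  exacts [hword σ, hjac i, hlast]

end Normal

section Reduction

variable {R M : Type*} [CommRing R] [AddCommGroup M] [Module R M]

namespace IsMalcevDialgebra

variable {f : M →ₗ[R] M →ₗ[R] M} (hf : IsMalcevDialgebra f)
include hf

lemma mul_swap (a b c : M) : f a (f c b) = -f a (f b c) :=
  eq_neg_of_add_eq_zero_right (hf.right_anticomm a b c)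

lemma mul_mul_swap (a b c d : M) : f a (f b (f d c)) = -f a (f b (f c d)) := by
  rw [hf.mul_swap b c d, map_neg]

lemma mul_mul_mul_swap (a b c d : M) : f a (f (f c b) d) = -f a (f (f b c) d) := by
  rw [hf.mul_swap a d (f c b), hf.mul_mul_swap a d b c, hf.mul_swap a d (f b c)]

lemma jacobian_swap_right (a b c : M) : jacobian f a c b = -jacobian f a b c := by
  simp only [jacobian, hf.mul_swap a b c]
  abel

lemma mul_jacobian_swap_left (a b c d : M) :
    f a (jacobian f c b d) = -f a (jacobian f b c d) := by
  simp only [jacobian, map_sub, hf.mul_mul_mul_swap a b c d, hf.mul_swap a (f b d) c,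
    hf.mul_swap a (f c d) b]
  abel

/-- The Jacobian is the cyclic sum of the `f a (f (f b c) d)` and the di-Malcev identity gives the
difference of two consecutive summands, so that `3` times each summand is known. -/
lemma three_smul_mul_word (a b c d : M) :
    (3 : R) • f a (f (f b c) d) = f a (jacobian f b c d)
      + (f (f (f a b) c) d - f (f (f a b) d) c - f (f (f a d) b) c + f (f (f a d) c) b
        - f (f a (f c d)) b - f (f a (f c b)) d)
      - (f (f (f a d) b) c - f (f (f a d) c) b - f (f (f a c) d) b + f (f (f a c) b) d
        - f (f a (f b c)) d - f (f a (f b d)) c) := by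
  have key (b c d : M) : f a (f (f b c) d) - f a (f (f c d) b)
      = f (f (f a b) c) d - f (f (f a b) d) c - f (f (f a d) b) c + f (f (f a d) c) b
        - f (f a (f c d)) b - f (f a (f c b)) d := by
    linear_combination (norm := module) -hf.malcev a b c d - hf.malcev a d c b
      - hf.right_anticomm (f a c) b d - hf.mul_mul_mul_swap a c d b
  have hJ : f a (jacobian f b c d) = f a (f (f b c) d) + f a (f (f d b) c) + f a (f (f c d) b) := by
    simp only [jacobian, map_sub, hf.mul_mul_mul_swap a b d c, hf.mul_swap a (f c d) b]
    abel
  linear_combination (norm := module) key b c d - key d b c - hJ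

end IsMalcevDialgebra

/-- The span of the normal monomials with leftmost entry `a` and further entries `y`. -/
def normalSpan (f : M →ₗ[R] M →ₗ[R] M) (a : M) (y : Fin 3 → M) : Submodule R M :=
  Submodule.span R (Set.range (normal f a y))

lemma normal_mem_normalSpan (f : M →ₗ[R] M →ₗ[R] M) (a : M) (y : Fin 3 → M) (i : NormalIndex) :
    normal f a y i ∈ normalSpan f a y :=
  Submodule.subset_span ⟨i, rfl⟩

lemma word_mem_normalSpan (f : M →ₗ[R] M →ₗ[R] M) (a : M) (y : Fin 3 → M) {i j k : Fin 3}
    (hij : i ≠ j) (hik : i ≠ k) (hjk : j ≠ k) :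
    f (f (f a (y i)) (y j)) (y k) ∈ normalSpan f a y := by
  obtain ⟨σ, rfl, rfl, rfl⟩ : ∃ σ : Equiv.Perm (Fin 3), σ 0 = i ∧ σ 1 = j ∧ σ 2 = k := by
    revert i j k; decide
  exact normal_mem_normalSpan f a y (.inl σ)

namespace IsMalcevDialgebra

variable {f : M →ₗ[R] M →ₗ[R] M} (hf : IsMalcevDialgebra f) (a : M) (y : Fin 3 → M)
  {i j k : Fin 3} (hij : i ≠ j) (hik : i ≠ k) (hjk : j ≠ k)
include hf hij hik hjk

lemma jacobian_mul_mem_normalSpan :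
    f (jacobian f a (y i) (y j)) (y k) ∈ normalSpan f a y := by
  have h : f (jacobian f a (y (k + 1)) (y (k + 2))) (y k) ∈ normalSpan f a y :=
    normal_mem_normalSpan f a y (.inr (.inl k))
  obtain ⟨rfl, rfl⟩ | ⟨rfl, rfl⟩ : i = k + 1 ∧ j = k + 2 ∨ i = k + 2 ∧ j = k + 1 := by
    clear h
    revert i j k
    decide
  · exact h
  · rw [hf.jacobian_swap_right, map_neg, LinearMap.neg_apply]
    exact neg_mem h

lemma mul_jacobian_mem_normalSpan :
    f a (jacobian f (y i) (y j) (y k)) ∈ normalSpan f a y := by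
  have h₀ : f a (jacobian f (y 0) (y 1) (y 2)) ∈ normalSpan f a y :=
    normal_mem_normalSpan f a y (.inr (.inr ()))
  have hright (b c d : M) : f a (jacobian f b d c) ∈ normalSpan f a y ↔
      f a (jacobian f b c d) ∈ normalSpan f a y := by
    rw [hf.jacobian_swap_right, map_neg, neg_mem_iff]
  have hleft (b c d : M) : f a (jacobian f c b d) ∈ normalSpan f a y ↔
      f a (jacobian f b c d) ∈ normalSpan f a y := by
    rw [hf.mul_jacobian_swap_left, neg_mem_iff]
  have hcases : i = 0 ∧ j = 1 ∧ k = 2 ∨ i = 0 ∧ j = 2 ∧ k = 1 ∨ i = 1 ∧ j = 0 ∧ k = 2 ∨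
      i = 1 ∧ j = 2 ∧ k = 0 ∨ i = 2 ∧ j = 0 ∧ k = 1 ∨ i = 2 ∧ j = 1 ∧ k = 0 := by
    clear h₀
    revert i j k
    decide
  obtain ⟨rfl, rfl, rfl⟩ | ⟨rfl, rfl, rfl⟩ | ⟨rfl, rfl, rfl⟩ | ⟨rfl, rfl, rfl⟩ | ⟨rfl, rfl, rfl⟩ |
    ⟨rfl, rfl, rfl⟩ := hcases
  · exact h₀
  · rwa [hright]
  · rwa [hleft]
  · rwa [hright, hleft]
  · rwa [hleft, hright]
  · rwa [hright, hleft, hright]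

lemma mul_pair_mul_mem_normalSpan : f (f a (f (y i) (y j))) (y k) ∈ normalSpan f a y := by
  have h : f (f a (f (y i) (y j))) (y k) = f (f (f a (y i)) (y j)) (y k)
      - f (f (f a (y j)) (y i)) (y k) - f (jacobian f a (y i) (y j)) (y k) := by
    simp only [jacobian, map_sub, LinearMap.sub_apply]
    abel
  rw [h]
  exact sub_mem (sub_mem (word_mem_normalSpan f a y hij hik hjk)
    (word_mem_normalSpan f a y hij.symm hjk hik))
    (hf.jacobian_mul_mem_normalSpan a y hij hik hjk)

lemma mul_word_mem_normalSpan (h3 : IsUnit (3 : R)) :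
    f a (f (f (y i) (y j)) (y k)) ∈ normalSpan f a y := by
  have word {i j k} := word_mem_normalSpan f a y (i := i) (j := j) (k := k)
  have pair {i j k} := hf.mul_pair_mul_mem_normalSpan a y (i := i) (j := j) (k := k)
  rw [← Submodule.smul_mem_iff_of_isUnit _ h3, hf.three_smul_mul_word]
  refine sub_mem (add_mem (hf.mul_jacobian_mem_normalSpan a y hij hik hjk) ?_) ?_
  · exact sub_mem (sub_mem (add_mem (sub_mem (sub_mem (word hij hik hjk)
      (word hik hij hjk.symm)) (word hik.symm hjk.symm hij)) (word hjk.symm hik.symm hij.symm))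
      (pair hjk hij.symm hik.symm)) (pair hij.symm hjk hik)
  · exact sub_mem (sub_mem (add_mem (sub_mem (sub_mem (word hik.symm hjk.symm hij)
      (word hjk.symm hik.symm hij.symm)) (word hjk hij.symm hik.symm)) (word hij.symm hjk hik))
      (pair hij hik hjk)) (pair hik hij hjk.symm)

lemma mul_mul_pair_mem_normalSpan (h3 : IsUnit (3 : R)) :
    f a (f (y i) (f (y j) (y k))) ∈ normalSpan f a y := by
  rw [hf.mul_swap a (f (y j) (y k)) (y i)]
  exact neg_mem (hf.mul_word_mem_normalSpan a y hjk hij.symm hik.symm h3)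

lemma mul_pair_pair_mem_normalSpan (h3 : IsUnit (3 : R)) :
    f (f a (y i)) (f (y j) (y k)) ∈ normalSpan f a y := by
  have h : f (f a (y i)) (f (y j) (y k)) = f (f (f a (y j)) (y i)) (y k)
      - f (f (f a (y k)) (y j)) (y i) - f (f a (f (y i) (y k))) (y j)
      - f a (f (f (y j) (y i)) (y k)) := by
    linear_combination (norm := module) -hf.malcev a (y j) (y i) (y k)
  rw [h]
  exact sub_mem (sub_mem (sub_mem (word_mem_normalSpan f a y hij.symm hjk hik)
    (word_mem_normalSpan f a y hjk.symm hik.symm hij.symm))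
    (hf.mul_pair_mul_mem_normalSpan a y hik hij hjk.symm))
    (hf.mul_word_mem_normalSpan a y hij.symm hjk hik h3)

end IsMalcevDialgebra

end Reduction

namespace BTree

variable {n : ℕ}

lemma card_vars_pos (t : BTree n) : 0 < t.vars.card := by
  induction t with
  | leaf i => simp [vars]
  | node s t hs ht => simp only [vars, Multiset.card_add]; omega

lemma eq_leaf_of_card_vars {t : BTree n} (h : t.vars.card = 1) : ∃ i, t = leaf i := by
  cases t with
  | leaf i => exact ⟨i, rfl⟩
  | node s t =>
    have := s.card_vars_pos
    have := t.card_vars_pos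
    simp only [vars, Multiset.card_add] at h
    omega

lemma eq_node_of_card_vars_two {t : BTree n} (h : t.vars.card = 2) :
    ∃ i j, t = node (leaf i) (leaf j) := by
  cases t with
  | leaf i => simp [vars] at h
  | node s t =>
    have := s.card_vars_pos
    have := t.card_vars_pos
    simp only [vars, Multiset.card_add] at h
    obtain ⟨i, rfl⟩ := s.eq_leaf_of_card_vars (by omega)
    obtain ⟨j, rfl⟩ := t.eq_leaf_of_card_vars (by omega)
    exact ⟨i, j, rfl⟩

lemma eq_node_of_card_vars_three {t : BTree n} (h : t.vars.card = 3) :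
    ∃ i j k, t = node (node (leaf i) (leaf j)) (leaf k)
      ∨ t = node (leaf i) (node (leaf j) (leaf k)) := by
  cases t with
  | leaf i => simp [vars] at h
  | node s t =>
    have := s.card_vars_pos
    have := t.card_vars_pos
    simp only [vars, Multiset.card_add] at h
    obtain hs | hs : s.vars.card = 1 ∨ s.vars.card = 2 := by omega
    · obtain ⟨i, rfl⟩ := s.eq_leaf_of_card_vars hs
      obtain ⟨j, k, rfl⟩ := t.eq_node_of_card_vars_two (by omega)
      exact ⟨i, j, k, .inr rfl⟩
    · obtain ⟨i, j, rfl⟩ := s.eq_node_of_card_vars_two hs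
      obtain ⟨k, rfl⟩ := t.eq_leaf_of_card_vars (by omega)
      exact ⟨i, j, k, .inl rfl⟩

lemma eq_node_of_card_vars_four {t : BTree n} (h : t.vars.card = 4) :
    ∃ p q r s, t = node (node (node (leaf p) (leaf q)) (leaf r)) (leaf s)
      ∨ t = node (node (leaf p) (node (leaf q) (leaf r))) (leaf s)
      ∨ t = node (node (leaf p) (leaf q)) (node (leaf r) (leaf s))
      ∨ t = node (leaf p) (node (node (leaf q) (leaf r)) (leaf s))
      ∨ t = node (leaf p) (node (leaf q) (node (leaf r) (leaf s))) := by
  cases t with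
  | leaf i => simp [vars] at h
  | node s t =>
    have := s.card_vars_pos
    have := t.card_vars_pos
    simp only [vars, Multiset.card_add] at h
    obtain hs | hs | hs : s.vars.card = 1 ∨ s.vars.card = 2 ∨ s.vars.card = 3 := by omega
    · obtain ⟨p, rfl⟩ := s.eq_leaf_of_card_vars hs
      obtain ⟨q, r, s, rfl | rfl⟩ := t.eq_node_of_card_vars_three (by omega)
      · exact ⟨p, q, r, s, .inr <| .inr <| .inr <| .inl rfl⟩
      · exact ⟨p, q, r, s, .inr <| .inr <| .inr <| .inr rfl⟩
    · obtain ⟨p, q, rfl⟩ := s.eq_node_of_card_vars_two hs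
      obtain ⟨r, s, rfl⟩ := t.eq_node_of_card_vars_two (by omega)
      exact ⟨p, q, r, s, .inr <| .inr <| .inl rfl⟩
    · obtain ⟨p, q, r, rfl | rfl⟩ := s.eq_node_of_card_vars_three hs
      · obtain ⟨s, rfl⟩ := t.eq_leaf_of_card_vars (by omega)
        exact ⟨p, q, r, s, .inl rfl⟩
      · obtain ⟨s, rfl⟩ := t.eq_leaf_of_card_vars (by omega)
        exact ⟨p, q, r, s, .inr <| .inl rfl⟩

lemma Multilinear.exists_eq_node {t : BTree 4} (h : t.Multilinear) :
    ∃ (p : Fin 4) (i j k : Fin 3), i ≠ j ∧ i ≠ k ∧ j ≠ k ∧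
      let q := leaf (p.succAbove i)
      let r := leaf (p.succAbove j)
      let s := leaf (p.succAbove k)
      (t = node (node (node (leaf p) q) r) s ∨ t = node (node (leaf p) (node q r)) s
        ∨ t = node (node (leaf p) q) (node r s) ∨ t = node (leaf p) (node (node q r) s)
        ∨ t = node (leaf p) (node q (node r s))) := by
  obtain ⟨p, q, r, s, ht⟩ := t.eq_node_of_card_vars_four (by rw [h]; rfl)
  have hvars : t.vars = {p, q, r, s} := by
    rcases ht with rfl | rfl | rfl | rfl | rfl <;>
      simp [vars, ← Multiset.singleton_add, add_assoc]
  have hnodup : ({p, q, r, s} : Multiset (Fin 4)).Nodup := by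
    rw [← hvars, h]
    exact Finset.univ.nodup
  simp only [Multiset.insert_eq_cons, Multiset.nodup_cons, Multiset.mem_cons,
    Multiset.mem_singleton, Multiset.nodup_singleton, not_or, and_true] at hnodup
  obtain ⟨⟨hpq, hpr, hps⟩, ⟨hqr, hqs⟩, hrs⟩ := hnodup
  obtain ⟨i, rfl⟩ := Fin.exists_succAbove_eq (Ne.symm hpq)
  obtain ⟨j, rfl⟩ := Fin.exists_succAbove_eq (Ne.symm hpr)
  obtain ⟨k, rfl⟩ := Fin.exists_succAbove_eq (Ne.symm hps)
  exact ⟨p, i, j, k, mt (congrArg _) hqr, mt (congrArg _) hqs, mt (congrArg _) hrs, ht⟩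

lemma map_eval {V W : Type} {m : V → V → V} {m' : W → W → W} {φ : V → W}
    (hφ : ∀ a b, φ (m a b) = m' (φ a) (φ b)) (x : Fin n → V) (t : BTree n) :
    φ (eval m x t) = eval m' (φ ∘ x) t := by
  induction t with
  | leaf i => rfl
  | node s t hs ht => rw [eval, hφ, hs, ht, eval]

end BTree

section Products

variable {R M N : Type*} [CommRing R] [AddCommGroup M] [Module R M] [AddCommGroup N] [Module R N]

/-- The pointwise product on the functions `ι → M`. -/
def piMul (ι : Type*) (f : M →ₗ[R] M →ₗ[R] M) : (ι → M) →ₗ[R] (ι → M) →ₗ[R] (ι → M) :=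
  LinearMap.mk₂ R (fun u v i => f (u i) (v i)) (fun _ _ _ => by ext; simp)
    (fun _ _ _ => by ext; simp) (fun _ _ _ => by ext; simp) (fun _ _ _ => by ext; simp)

/-- The componentwise product on `M × N`. -/
def prodMul (f : M →ₗ[R] M →ₗ[R] M) (g : N →ₗ[R] N →ₗ[R] N) :
    M × N →ₗ[R] M × N →ₗ[R] M × N :=
  LinearMap.mk₂ R (fun u v => (f u.1 v.1, g u.2 v.2)) (by simp) (by simp) (by simp) (by simp)

namespace IsMalcevDialgebra

variable {f : M →ₗ[R] M →ₗ[R] M} (hf : IsMalcevDialgebra f)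
include hf

lemma pi (ι : Type*) : IsMalcevDialgebra (piMul ι f) where
  right_anticomm a b c := funext fun i => hf.right_anticomm (a i) (b i) (c i)
  malcev a b c d := funext fun i => hf.malcev (a i) (b i) (c i) (d i)

lemma prod {g : N →ₗ[R] N →ₗ[R] N} (hg : IsMalcevDialgebra g) :
    IsMalcevDialgebra (prodMul f g) where
  right_anticomm a b c :=
    Prod.ext (hf.right_anticomm a.1 b.1 c.1) (hg.right_anticomm a.2 b.2 c.2)
  malcev a b c d :=
    Prod.ext (hf.malcev a.1 b.1 c.1 d.1) (hg.malcev a.2 b.2 c.2 d.2)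

end IsMalcevDialgebra

end Products

section NormalEval

variable {R M N : Type*} [CommRing R] [AddCommGroup M] [Module R M] [AddCommGroup N] [Module R N]

/-- The linear combination with coefficients `γ` of the normal monomials of degree `4`. The
leftmost variable of such a monomial is the first component of its index. -/
def normalEval (f : M →ₗ[R] M →ₗ[R] M) (x : Fin 4 → M) :
    (Fin 4 × NormalIndex → R) →ₗ[R] M :=
  Fintype.linearCombination R fun p => normal f (x p.1) (x ∘ p.1.succAbove) p.2

lemma map_jacobian {f : M →ₗ[R] M →ₗ[R] M} {g : N →ₗ[R] N →ₗ[R] N} (φ : M →ₗ[R] N)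
    (hφ : ∀ a b, φ (f a b) = g (φ a) (φ b)) (a b c : M) :
    φ (jacobian f a b c) = jacobian g (φ a) (φ b) (φ c) := by
  simp only [jacobian, hφ, map_sub]

lemma map_normal {f : M →ₗ[R] M →ₗ[R] M} {g : N →ₗ[R] N →ₗ[R] N} (φ : M →ₗ[R] N)
    (hφ : ∀ a b, φ (f a b) = g (φ a) (φ b)) (a : M) (y : Fin 3 → M) (i : NormalIndex) :
    φ (normal f a y i) = normal g (φ a) (φ ∘ y) i := by
  rcases i with σ | i | _ <;> simp only [normal, map_jacobian φ hφ, hφ, Function.comp_apply]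

lemma map_normalEval {f : M →ₗ[R] M →ₗ[R] M} {g : N →ₗ[R] N →ₗ[R] N} (φ : M →ₗ[R] N)
    (hφ : ∀ a b, φ (f a b) = g (φ a) (φ b)) (x : Fin 4 → M) (γ : Fin 4 × NormalIndex → R) :
    φ (normalEval f x γ) = normalEval g (φ ∘ x) γ := by
  simp only [normalEval, Fintype.linearCombination_apply, map_sum, map_smul, map_normal φ hφ,
    Function.comp_assoc, Function.comp_apply]

lemma normalSpan_le_range_normalEval (f : M →ₗ[R] M →ₗ[R] M) (x : Fin 4 → M) (p : Fin 4) :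
    normalSpan f (x p) (x ∘ p.succAbove) ≤ (normalEval f x).range := by
  rw [normalEval, Fintype.range_linearCombination, normalSpan]
  exact Submodule.span_mono (Set.range_subset_iff.mpr fun i => ⟨(p, i), rfl⟩)

end NormalEval

section PolyEval

variable {n : ℕ} {R : Type*} {M N : Type} [CommRing R] [AddCommGroup M] [Module R M]
  [AddCommGroup N] [Module R N]

/-- The value at `x` of a nonassociative polynomial. -/
noncomputable def polyEval (f : M →ₗ[R] M →ₗ[R] M) (x : Fin n → M) :
    (BTree n →₀ R) →ₗ[R] M :=
  Finsupp.linearCombination R (BTree.eval (fun a b => f a b) x)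

lemma polyEval_apply (f : M →ₗ[R] M →ₗ[R] M) (x : Fin n → M) (P : BTree n →₀ R) :
    polyEval f x P = P.sum fun t k => k • BTree.eval (fun a b => f a b) x t :=
  Finsupp.linearCombination_apply R P

lemma map_polyEval {f : M →ₗ[R] M →ₗ[R] M} {g : N →ₗ[R] N →ₗ[R] N} (φ : M →ₗ[R] N)
    (hφ : ∀ a b, φ (f a b) = g (φ a) (φ b)) (x : Fin n → M) (P : BTree n →₀ R) :
    φ (polyEval f x P) = polyEval g (φ ∘ x) P := by
  simp only [polyEval_apply, map_finsuppSum, map_smul,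
    BTree.map_eval (m := fun a b => f a b) (m' := fun a b => g a b) hφ]

namespace IsMalcevDialgebra

variable {f : M →ₗ[R] M →ₗ[R] M} (hf : IsMalcevDialgebra f)
include hf

lemma eval_mem_range_normalEval (h3 : IsUnit (3 : R)) (x : Fin 4 → M) {t : BTree 4}
    (ht : t.Multilinear) : BTree.eval (fun a b => f a b) x t ∈ (normalEval f x).range := by
  obtain ⟨p, i, j, k, hij, hik, hjk, ht⟩ := ht.exists_eq_node
  refine normalSpan_le_range_normalEval f x p ?_
  rcases ht with rfl | rfl | rfl | rfl | rfl
  · exact word_mem_normalSpan f _ _ hij hik hjk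
  · exact hf.mul_pair_mul_mem_normalSpan _ _ hij hik hjk
  · exact hf.mul_pair_pair_mem_normalSpan _ _ hij hik hjk h3
  · exact hf.mul_word_mem_normalSpan _ _ hij hik hjk h3
  · exact hf.mul_mul_pair_mem_normalSpan _ _ hij hik hjk h3

/-- The generic point of the algebra of functions on `Fin 4 → M` makes the coefficients
independent of the evaluation. -/
theorem exists_polyEval_eq_normalEval (h3 : IsUnit (3 : R)) {P : BTree 4 →₀ R}
    (hP : ∀ t ∈ P.support, t.Multilinear) :
    ∃ γ, ∀ x, polyEval f x P = normalEval f x γ := by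
  let ξ (p : Fin 4) (x : Fin 4 → M) : M := x p
  obtain ⟨γ, hγ⟩ : polyEval (piMul _ f) ξ P ∈ (normalEval (piMul _ f) ξ).range :=
    Submodule.sum_mem _ fun t ht =>
      Submodule.smul_mem _ _ ((hf.pi _).eval_mem_range_normalEval h3 ξ (hP t ht))
  refine ⟨γ, fun x => ?_⟩
  have hx := congrArg (LinearMap.proj (R := R) x) hγ
  rw [map_normalEval (g := f) _ fun _ _ => rfl, map_polyEval (g := f) _ fun _ _ => rfl] at hx
  exact hx.symm

end IsMalcevDialgebra

end PolyEval

section Detection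

variable {R A : Type*} [CommRing R] [AddCommGroup A] [Module R A]

lemma normal_zero_left {M : Type*} [AddCommGroup M] [Module R M] (f : M →ₗ[R] M →ₗ[R] M)
    (y : Fin 3 → M) (i : NormalIndex) : normal f 0 y i = 0 := by
  rcases i with σ | i | _ <;>
    simp only [normal, jacobian, map_zero, LinearMap.zero_apply, sub_zero]

lemma snd_normal_splitNull (μ : A →ₗ[R] A →ₗ[R] A) (a : A × A) (y : Fin 3 → A × A)
    (i : NormalIndex) :
    (normal (dicommutator (splitNullLeft μ) (splitNullRight μ)) a y i).2
      = normal (dicommutator μ μ) a.2 (fun k => (y k).1) i := by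
  rcases i with σ | i | _ <;> rfl

lemma snd_normalEval_splitNull (μ : A →ₗ[R] A →ₗ[R] A) (γ : Fin 4 × NormalIndex → R) (p : Fin 4)
    (a : A) (y : Fin 3 → A) :
    (normalEval (dicommutator (splitNullLeft μ) (splitNullRight μ))
        (p.insertNth (0, a) fun k => (y k, 0)) γ).2
      = ∑ i, γ (p, i) • normal (dicommutator μ μ) a y i := by
  rw [normalEval, Fintype.linearCombination_apply, Prod.snd_sum, Fintype.sum_prod_type,
    Fin.sum_univ_succAbove _ p]
  simp [snd_normal_splitNull, normal_zero_left]

theorem eq_zero_of_normalEval_splitNull_nullCayley {γ : Fin 4 × NormalIndex → R}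
    (h2 : IsUnit (2 : R)) (h3 : IsUnit (3 : R))
    (h : ∀ x, normalEval (dicommutator (splitNullLeft (nullCayley (K := R)))
      (splitNullRight nullCayley)) x γ = 0) : γ = 0 := by
  have hp (p : Fin 4) : (fun i => γ (p, i)) = 0 :=
    normal_coeff_eq_zero h2 h3 fun a y => by rw [← snd_normalEval_splitNull, h, Prod.snd_zero]
  exact funext fun p => congrFun (hp p.1) p.2

end Detection

theorem degree4_dicommutator_identities_general {K : Type} [CommRing K] (h2 : IsUnit (2 : K))
    (h3 : IsUnit (3 : K)) {P : BTree 4 →₀ K} (hml : ∀ t ∈ P.support, t.Multilinear)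
    (hvanish : ∀ z, polyEval (dicommutator (splitNullLeft (nullCayley (K := K)))
      (splitNullRight nullCayley)) z P = 0)
    {M : Type} [AddCommGroup M] [Module K M] {f : M →ₗ[K] M →ₗ[K] M} (hf : IsMalcevDialgebra f)
    (x : Fin 4 → M) : polyEval f x P = 0 := by
  let D := dicommutator (splitNullLeft (nullCayley (K := K))) (splitNullRight nullCayley)
  have hD : IsMalcevDialgebra D := isMalcevDialgebra_splitNull
    ((isAlternative_nullCayley (K := K)).isMalcevDialgebra_commutator h2)
  obtain ⟨γ, hγ⟩ := (hf.prod hD).exists_polyEval_eq_normalEval h3 hml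
  have hγ₀ : γ = 0 := eq_zero_of_normalEval_splitNull_nullCayley h2 h3 fun z => by
    have hz := congrArg (LinearMap.snd K _ _) (hγ fun p => (0, z p))
    rw [map_polyEval (g := D) _ fun _ _ => rfl, map_normalEval (g := D) _ fun _ _ => rfl] at hz
    exact hz.symm.trans (hvanish z)
  have hx := congrArg (LinearMap.fst K _ _) (hγ fun p => (x p, 0))
  rw [map_polyEval (g := f) _ fun _ _ => rfl, hγ₀, map_zero, map_zero] at hx
  exact hx

/-- Over a field `K` of characteristic not 2 and not 3, every multilinear polynomial identity `P` of degree 4 satisfied by the dicommutator in every alternative dialgebra over `K` is satisfied in every Malcev dialgebra over `K`; that is, `P` is a consequence of right anticommutativity and the di-Malcev identity. -/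
theorem degree4_dicommutator_identities (K : Type) [Field K]
    (h2 : (2 : K) ≠ 0) (h3 : (3 : K) ≠ 0)
    (P : BTree 4 →₀ K) (hml : ∀ t ∈ P.support, t.Multilinear)
    (hvanish : ∀ (D : Type) [AddCommGroup D] [Module K D]
      (l r : D →ₗ[K] D →ₗ[K] D),
      (∀ a b c : D, r (l a b) c = r (r a b) c) →
      (∀ a b c : D, l a (l b c) = l a (r b c)) →
      (∀ a b c : D, (l (l a b) c - l a (l b c)) + (r (r c b) a - r c (r b a)) = 0) →
      (∀ a b c : D, (l (l a b) c - l a (l b c)) - (r (r b c) a - r b (r c a)) = 0) →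
      (∀ a b c : D, (l (r a b) c - r a (l b c)) + (r (r a c) b - r a (r c b)) = 0) →
      ∀ x : Fin 4 → D,
        P.sum (fun t k => k • BTree.eval (fun a b => l a b - r b a) x t) = 0) :
    ∀ (M : Type) [AddCommGroup M] [Module K M] (f : M →ₗ[K] M →ₗ[K] M),
      (∀ a b c : M, f a (f b c) + f a (f c b) = 0) →
      (∀ a b c d : M,
        f (f (f a b) c) d - f (f (f a d) b) c - f (f a (f c d)) b
          - f (f a c) (f b d) - f a (f (f b c) d) = 0) →
      ∀ x : Fin 4 → M,
        P.sum (fun t k => k • BTree.eval (fun a b => f a b) x t) = 0 := by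
  intro M _ _ f hanti hmalcev x
  have hD := (isAlternative_nullCayley (K := K)).isAlternativeDialgebra_splitNull
  rw [← polyEval_apply]
  refine degree4_dicommutator_identities_general h2.isUnit h3.isUnit hml (fun z => ?_)
    ⟨hanti, hmalcev⟩ x
  rw [polyEval_apply]
  exact hvanish _ _ _ hD.right_bar hD.left_bar hD.left_add_right hD.left_sub_right
    hD.inner_add_right z
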